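/- arXiv:1612.08497 — 3 statements merged into one kernel-verified Lean document; each statement's English description precedes it below -/
import Mathlib

section
/- Lemma 3.3 (key coset identity): The right cosets W_{P_2}·(w_1 · w̃_{m+1}) and W_{P_2}·((s_2 s_3 ⋯ s_{m+1}) · w̃_{m+1}) in W coincide; equivalently, w_1 · (s_{m+1} s_m ⋯ s_3 s_2) belongs to the standard parabolic subgroup W_{P_2}. (The element (s_2 s_3 ⋯ s_{m+1}) · w̃_{m+1} is the longest minimal-length coset representative w^2 of W_{P_2}\W, so this is the statement W_{P_2} w_1 w̃_{m+1} = W_{P_2} w^2.) -/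
/-!
Write `s k` for the `k`-th simple reflection. The letter `s 1` never occurs in `w_1`, which is the
longest element of the type `A_m` subgroup on `s 2, …, s (m+1)`; only type `A` relations are needed.

The palindrome identity `asc_mul_desc` expresses one and the same reflection in two ways:
`s 2 ⋯ s (n+1) · s (n+2) · s (n+1) ⋯ s 2 = s (n+2) ⋯ s 3 · s 2 · s 3 ⋯ s (n+2)`.
It lets the factor `s 2` be absorbed one block at a time: if the product of the first `n` blocks of
`w_1` is `h · (s 2 ⋯ s (n+1))` with `h ∈ W_{P_2}`, then multiplying by the next block
`s (n+2) ⋯ s 2` gives `h · (s (n+2) ⋯ s 3) · (s 2 ⋯ s (n+2))`, and `s (n+2) ⋯ s 3 ∈ W_{P_2}`.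
Hence `w_1 ∈ W_{P_2} · (s 2 ⋯ s (m+1))` (`exists_w1_eq`), which gives both claims because
`(s 2 ⋯ s (m+1))⁻¹ = s (m+1) ⋯ s 2`.
-/

namespace FMK3

/-- Entry of the Coxeter matrix of type `D_{m+1}`, with 1-based indices:
nodes `1` and `2` are the two fork ends, both attached to node `3` of the
chain `3 - 4 - ... - (m+1)`. -/
def dEntry (a b : ℕ) : ℕ :=
  if a = b then 1
  else if (min a b = 1 ∧ max a b = 3) ∨ (min a b = 2 ∧ max a b = 3)
      ∨ (3 ≤ min a b ∧ max a b = min a b + 1) then 3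
  else 2

theorem dEntry_symm (a b : ℕ) : dEntry a b = dEntry b a := by
  unfold dEntry
  rw [Nat.min_comm b a, Nat.max_comm b a]
  by_cases h : a = b
  · subst h; rfl
  · have h' : ¬b = a := fun hh => h hh.symm
    rw [if_neg h, if_neg h']

/-- The Coxeter matrix of type `D_{m+1}` on `Fin (m+1)` (index `i` corresponds to the
simple reflection `s_{i+1}` in the 1-based numbering). -/
def dMatrix (m : ℕ) : CoxeterMatrix (Fin (m + 1)) where
  M := Matrix.of fun i j => dEntry (i.val + 1) (j.val + 1)
  isSymm := Matrix.IsSymm.ext fun i j => dEntry_symm (j.val + 1) (i.val + 1)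
  diagonal := fun i => by simp [dEntry]
  off_diagonal := fun i j h => by
    have hab : i.val + 1 ≠ j.val + 1 := fun hh => h (Fin.ext (Nat.succ_injective hh))
    simp only [Matrix.of_apply]
    unfold dEntry
    rw [if_neg hab]
    split <;> omega

/-- The Coxeter group of type `D_{m+1}`. -/
abbrev DGroup (m : ℕ) := (dMatrix m).Group

/-- The canonical Coxeter system of type `D_{m+1}`. -/
def dcs (m : ℕ) : CoxeterSystem (dMatrix m) (DGroup m) := (dMatrix m).toCoxeterSystem

/-- Conversion from the 1-based index `k` (of the simple reflection `s_k`) to `Fin (m+1)`. -/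
def toIdx (m k : ℕ) : Fin (m + 1) := ⟨(k - 1) % (m + 1), Nat.mod_lt _ m.succ_pos⟩

/-- The descending word `[a, a-1, ..., b]` (1-based letters). -/
def desc (a b : ℕ) : List ℕ := (List.range (a + 1 - b)).map (fun t => a - t)

/-- The ascending word `[a, a+1, ..., b]` (1-based letters). -/
def asc (a b : ℕ) : List ℕ := (List.range (b + 1 - a)).map (fun t => a + t)

/-- The word `(s_2)(s_3 s_2)(s_4 s_3 s_2) ⋯ (s_{m+1} ⋯ s_4 s_3 s_2)` defining `w_1`. -/
def w1Word (m : ℕ) : List ℕ := (List.range m).flatMap (fun j => desc (j + 2) 2)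

/-- The word `(s_1 s_2)(s_3 s_1 s_2 s_3) ⋯ (s_m ⋯ s_3 s_1 s_2 s_3 ⋯ s_m)`
defining `w_{m+1}`. -/
def wLastWord (m : ℕ) : List ℕ :=
  (List.range (m - 1)).flatMap (fun j => desc (j + 2) 3 ++ [1, 2] ++ asc 3 (j + 2))

/-- The word `(s_1)(s_3 s_2)(s_4 s_3 s_1) ⋯ (s_{j+1} ⋯ s_4 s_3 c_j) ⋯` defining `w̃_{m+1}`,
where `c_j = s_1` for odd `j` and `c_j = s_2` for even `j`, `j = 1, ..., m-1`. -/
def wTildeWord (m : ℕ) : List ℕ :=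
  (List.range (m - 1)).flatMap
    (fun j => desc (j + 2) 3 ++ [if (j + 1) % 2 = 1 then 1 else 2])

/-- The element of the Coxeter group of type `D_{m+1}` given by a word in the 1-based
letters `s_1, ..., s_{m+1}`. -/
def wp (m : ℕ) (w : List ℕ) : DGroup m := (dcs m).wordProd (w.map (toIdx m))

/-- The standard parabolic subgroup `W_{P_i}` generated by all simple reflections
except `s_i` (1-based `i`). -/
def WP (m i : ℕ) : Subgroup (DGroup m) :=
  Subgroup.closure ((dcs m).simple '' {j | j ≠ toIdx m i})


/-- The simple reflection `s_k`, with 1-based index `k`. The junk indices are `0`, giving `s_1`, and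
`k > m+1`, which wrap around modulo `m+1`. -/
def sRef (m k : ℕ) : DGroup m := (dcs m).simple (toIdx m k)

theorem wp_nil (m : ℕ) : wp m [] = 1 := by simp [wp]

theorem wp_append (m : ℕ) (u v : List ℕ) : wp m (u ++ v) = wp m u * wp m v := by
  simp [wp, CoxeterSystem.wordProd_append]

theorem wp_singleton (m k : ℕ) : wp m [k] = sRef m k := by
  simp [wp, sRef]

theorem wp_cons (m k : ℕ) (u : List ℕ) : wp m (k :: u) = sRef m k * wp m u := by
  simp [wp, sRef, CoxeterSystem.wordProd_cons]

theorem asc_succ {a b : ℕ} (h : a ≤ b + 1) : asc a (b + 1) = asc a b ++ [b + 1] := by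
  unfold asc
  rw [show b + 1 + 1 - a = (b + 1 - a) + 1 by omega, List.range_succ, List.map_append]
  simp only [List.map_cons, List.map_nil]
  rw [show a + (b + 1 - a) = b + 1 by omega]

theorem desc_succ {a b : ℕ} (h : b ≤ a + 1) : desc (a + 1) b = (a + 1) :: desc a b := by
  unfold desc
  rw [show a + 1 + 1 - b = (a + 1 - b) + 1 by omega, List.range_succ_eq_map]
  simp [Function.comp_def]

theorem mem_asc {a b k : ℕ} (h : k ∈ asc a b) : a ≤ k ∧ k ≤ b := by
  simp only [asc, List.mem_map, List.mem_range] at h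
  omega

theorem mem_desc {a b k : ℕ} (h : k ∈ desc a b) : b ≤ k ∧ k ≤ a := by
  simp only [desc, List.mem_map, List.mem_range] at h
  omega

theorem refl_mul_self (m k : ℕ) : sRef m k * sRef m k = 1 :=
  (dcs m).simple_mul_simple_self _

theorem refl_pow (m a b : ℕ) (ha : 1 ≤ a) (ha' : a ≤ m + 1) (hb : 1 ≤ b) (hb' : b ≤ m + 1) :
    (sRef m a * sRef m b) ^ dEntry a b = 1 := by
  have h := (dcs m).simple_mul_simple_pow (toIdx m a) (toIdx m b)
  have e : (dMatrix m).M (toIdx m a) (toIdx m b) = dEntry a b := by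
    simp only [dMatrix, toIdx, Matrix.of_apply]
    rw [Nat.mod_eq_of_lt (by omega), Nat.mod_eq_of_lt (by omega),
      Nat.sub_add_cancel ha, Nat.sub_add_cancel hb]
  rw [← e]
  exact h

theorem refl_comm {m a b : ℕ} (ha : 2 ≤ a) (hab : a + 2 ≤ b) (hb : b ≤ m + 1) :
    Commute (sRef m b) (sRef m a) := by
  have h := refl_pow m a b (by omega) (by omega) (by omega) hb
  have e : dEntry a b = 2 := by
    unfold dEntry
    rw [min_eq_left (by omega), max_eq_right (by omega), if_neg (by omega), if_neg (by omega)]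
  rw [e, pow_two] at h
  have h1 := eq_inv_of_mul_eq_one_left h
  rw [mul_inv_rev, inv_eq_of_mul_eq_one_left (refl_mul_self m a),
    inv_eq_of_mul_eq_one_left (refl_mul_self m b)] at h1
  exact h1.symm

theorem refl_braid {m a : ℕ} (ha : 2 ≤ a) (hb : a ≤ m) :
    sRef m a * sRef m (a + 1) * sRef m a = sRef m (a + 1) * sRef m a * sRef m (a + 1) := by
  have h := refl_pow m a (a + 1) (by omega) (by omega) (by omega) (by omega)
  have e : dEntry a (a + 1) = 3 := by
    unfold dEntry
    rw [min_eq_left (by omega), max_eq_right (by omega), if_neg (by omega), if_pos (by omega)]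
  have h1 : (sRef m a * sRef m (a + 1) * sRef m a) *
      (sRef m (a + 1) * sRef m a * sRef m (a + 1)) = 1 := by
    rw [← h, e]
    simp only [pow_succ, pow_zero, one_mul, mul_assoc]
  have h2 := eq_inv_of_mul_eq_one_left h1
  simpa only [mul_inv_rev, inv_eq_of_mul_eq_one_left (refl_mul_self m _), mul_assoc] using h2

theorem commute_wp {m b : ℕ} (hb : b ≤ m + 1) (u : List ℕ)
    (hu : ∀ k ∈ u, 2 ≤ k ∧ k + 2 ≤ b) : Commute (sRef m b) (wp m u) := by
  induction u with
  | nil => rw [wp_nil]; exact Commute.one_right _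
  | cons k u ih =>
    rw [wp_cons]
    have hk := hu k (by simp)
    exact (refl_comm hk.1 hk.2 hb).mul_right (ih fun j hj => hu j (by simp [hj]))

/-- Two palindromic words for one reflection. When `s_2, …, s_{n+2}` are read as the adjacent
transpositions of a symmetric group, it is the transposition of the first and the last point. -/
theorem asc_mul_desc {m n : ℕ} (hn : n + 1 ≤ m) :
    wp m (asc 2 (n + 1)) * wp m (desc (n + 2) 2) =
      wp m (desc (n + 2) 3) * wp m (asc 2 (n + 2)) := by
  induction n with
  | zero => simp [asc, desc, wp_nil]
  | succ n ih =>
    specialize ih (by omega)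
    have hA : Commute (sRef m (n + 3)) (wp m (asc 2 (n + 1))) :=
      commute_wp (by omega) _ fun k hk => by have := mem_asc hk; omega
    have hD : Commute (sRef m (n + 3)) (wp m (desc (n + 1) 2)) :=
      commute_wp (by omega) _ fun k hk => by have := mem_desc hk; omega
    have hB := refl_braid (m := m) (a := n + 2) (by omega) (by omega)
    have e1 : desc (n + 3) 2 = (n + 3) :: (n + 2) :: desc (n + 1) 2 := by
      rw [desc_succ (by omega), desc_succ (by omega)]
    have e2 : desc (n + 2) 2 = (n + 2) :: desc (n + 1) 2 := desc_succ (by omega)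
    have e3 : asc 2 (n + 3) = asc 2 (n + 2) ++ [n + 3] := asc_succ (by omega)
    have e4 : asc 2 (n + 2) = asc 2 (n + 1) ++ [n + 2] := asc_succ (by omega)
    have e5 : desc (n + 3) 3 = (n + 3) :: desc (n + 2) 3 := desc_succ (by omega)
    rw [e2, wp_cons] at ih
    change wp m (asc 2 (n + 2)) * wp m (desc (n + 3) 2) =
      wp m (desc (n + 3) 3) * wp m (asc 2 (n + 3))
    rw [e1, e3, e5, wp_append m _ [n + 3], wp_cons, wp_cons, wp_cons, wp_singleton]
    calc wp m (asc 2 (n + 2)) * (sRef m (n + 3) * (sRef m (n + 2) * wp m (desc (n + 1) 2)))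
        = wp m (asc 2 (n + 1)) * (sRef m (n + 2) * sRef m (n + 3) * sRef m (n + 2)) *
            wp m (desc (n + 1) 2) := by
          rw [e4, wp_append, wp_singleton]; simp only [mul_assoc]
      _ = (wp m (asc 2 (n + 1)) * sRef m (n + 3)) * sRef m (n + 2) *
            (sRef m (n + 3) * wp m (desc (n + 1) 2)) := by
          rw [hB]; simp only [mul_assoc]
      _ = sRef m (n + 3) * (wp m (asc 2 (n + 1)) * (sRef m (n + 2) * wp m (desc (n + 1) 2))) *
            sRef m (n + 3) := by
          rw [← hA.eq, hD.eq]; simp only [mul_assoc]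
      _ = sRef m (n + 3) * wp m (desc (n + 2) 3) * (wp m (asc 2 (n + 2)) * sRef m (n + 3)) := by
          rw [ih]; simp only [mul_assoc]

theorem asc_mul_desc_self (m n : ℕ) : wp m (asc 2 (n + 1)) * wp m (desc (n + 1) 2) = 1 := by
  induction n with
  | zero => simp [asc, desc, wp_nil]
  | succ n ih =>
    rw [asc_succ (by omega), desc_succ (by omega), wp_append, wp_singleton, wp_cons, mul_assoc,
      ← mul_assoc (sRef m _) (sRef m _), refl_mul_self, one_mul, ih]

theorem wp_mem_WP {m : ℕ} (hm : 1 ≤ m) (u : List ℕ) (hu : ∀ k ∈ u, 3 ≤ k ∧ k ≤ m + 1) :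
    wp m u ∈ WP m 2 := by
  induction u with
  | nil => rw [wp_nil]; exact one_mem _
  | cons k u ih =>
    rw [wp_cons]
    refine mul_mem (Subgroup.subset_closure ⟨toIdx m k, ?_, rfl⟩)
      (ih fun j hj => hu j (by simp [hj]))
    have hk := hu k (by simp)
    intro h
    have h' := congrArg Fin.val h
    simp only [toIdx] at h'
    rw [Nat.mod_eq_of_lt (by omega), Nat.mod_eq_of_lt (by omega)] at h'
    omega

theorem exists_w1_eq {m n : ℕ} (hn : n ≤ m) :
    ∃ h ∈ WP m 2, wp m (w1Word n) = h * wp m (asc 2 (n + 1)) := by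
  induction n with
  | zero => exact ⟨1, one_mem _, by simp [w1Word, asc, wp_nil]⟩
  | succ n ih =>
    obtain ⟨h, hh, e⟩ := ih (by omega)
    refine ⟨h * wp m (desc (n + 2) 3), mul_mem hh (wp_mem_WP (by omega) _ fun k hk => ?_), ?_⟩
    · have := mem_desc hk
      omega
    · have ew : w1Word (n + 1) = w1Word n ++ desc (n + 2) 2 := by
        simp [w1Word, List.range_succ]
      rw [ew, wp_append, e, mul_assoc, asc_mul_desc hn, mul_assoc]

/-- Lemma 3.3: the right cosets `W_{P_2} · (w_1 · w̃_{m+1})` and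
`W_{P_2} · ((s_2 s_3 ⋯ s_{m+1}) · w̃_{m+1})` coincide; equivalently,
`w_1 · (s_{m+1} s_m ⋯ s_3 s_2)` belongs to the standard parabolic subgroup `W_{P_2}`. -/
theorem statement0 (m : ℕ) (hm : 3 ≤ m) :
    ((fun h => h * (wp m (w1Word m) * wp m (wTildeWord m))) ''
        (WP m 2 : Set (DGroup m)) =
      (fun h => h * (wp m (asc 2 (m + 1)) * wp m (wTildeWord m))) ''
        (WP m 2 : Set (DGroup m))) ∧
    wp m (w1Word m) * wp m (desc (m + 1) 2) ∈ WP m 2 := by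
  obtain ⟨h, hh, e⟩ := exists_w1_eq (le_refl m)
  refine ⟨?_, ?_⟩
  · ext x
    simp only [Set.mem_image, SetLike.mem_coe]
    constructor
    · rintro ⟨y, hy, rfl⟩
      exact ⟨y * h, mul_mem hy hh, by rw [e]; simp only [mul_assoc]⟩
    · rintro ⟨y, hy, rfl⟩
      exact ⟨y * h⁻¹, mul_mem hy (inv_mem hh), by rw [e]; group⟩
  · rw [e, mul_assoc, asc_mul_desc_self, mul_one]
    exact hh

end FMK3
end

section
/- Set w^2 := (s_2 s_3 ⋯ s_{m+1}) · w̃_{m+1}. Then ℓ(w^2) = m(m+1)/2, w^2 is the minimal-length element of its coset W_{P_2}·w^2 (i.e., ℓ(w^2) ≤ ℓ(u) for all u ∈ W_{P_2}·w^2), and every right coset W_{P_2}·v with v ∈ W contains an element of length at most m(m+1)/2. In other words, w^2 is the longest element of the set W^{P_2} of minimal-length representatives of W_{P_2}\W. (This is the identification made at the end of the proof of Lemma 3.3.) -/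
/-! The cosets in `W_{P_2} \ W` are modelled by the weights of a half-spin representation, scaled
so that their entries are `±1`: the group acts on sign vectors through the reflections in the
simple roots `e_1 - e_0`, `e_0 + e_1`, `e_k - e_{k-1}`, and `W_{P_2}` fixes the all-plus vector.
The height `Σ i x_i` changes by at most `2` under a simple reflection, since every simple root has
height `1`.

Lower bound (`height_orbit_ge`): a group element taking the all-plus vector to `x` has length at
least half the drop in height. The word for `w²` sends the all-plus vector to a vector whose
entries `1, …, m` are all `-1` (`height_orbit_w2`), so the drop is `m(m+1)` and every element of
the coset of `w²` has length at least `m(m+1)/2`, which is the number of letters in the word.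

Upper bound (`orbit_rep`): every weight `x` gets a word `rep x` obtained by climbing back to the
all-plus vector, one height step per letter. Modulo `W_{P_2}` the result does not depend on the
path (`rep_descent`): two simple reflections that both raise `x` commute, because pairings of
weights with roots are bounded by `2`. A simple reflection fixing `x` also fixes the coset of
`rep x`; this is carried through the same induction by commutation and braid relations. Hence `v`
lies in the coset of `rep x` for `x` the image of the all-plus vector under `v`, and the length of
`rep x` is at most half the total drop in height, `m(m+1)/2`. -/

namespace FMK3

/-! ### Roots and reflections -/

/-- The larger of the two coordinates in the support of the simple root with 0-based index `k`. -/
def hi (k : ℕ) : ℕ := max k 1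

/-- The coefficient of `e_{hi k - 1}` in the simple root with 0-based index `k`: it is `1` only for
`k = 1`, whose root is `e_1 + e_0`. -/
def sgn (k : ℕ) : ℤ := if k = 1 then 1 else -1

/-- The simple root with 0-based index `k` (belonging to `s_{k+1}`), namely
`e_{hi k} + sgn k • e_{hi k - 1}`, as a vector with coordinates indexed by all of `ℕ`. -/
def root (k : ℕ) (i : ℕ) : ℤ :=
  (if i = hi k then 1 else 0) + sgn k * (if i = hi k - 1 then 1 else 0)

/-- The inner product of a vector with the simple root `root k`. -/
def pair (k : ℕ) (x : ℕ → ℤ) : ℤ := x (hi k) + sgn k * x (hi k - 1)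

/-- The reflection in the simple root `root k`. -/
def refl (k : ℕ) (x : ℕ → ℤ) : ℕ → ℤ := fun i => x i - pair k x * root k i

theorem pair_refl (k l : ℕ) (x : ℕ → ℤ) :
    pair l (refl k x) = pair l x - pair k x * pair l (root k) := by
  simp only [pair, refl]; ring

theorem pair_root_self (k : ℕ) : pair k (root k) = 2 := by
  have h : hi k ≠ hi k - 1 := by unfold hi; omega
  have hs : sgn k * sgn k = 1 := by unfold sgn; split_ifs <;> rfl
  simp only [pair, root, if_true, if_neg h, if_neg h.symm]
  linear_combination hs

theorem pair_root (k l : ℕ) (h : k ≠ l) :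
    pair l (root k) = if dEntry (k + 1) (l + 1) = 3 then -1 else 0 := by
  rcases k with _ | _ | k <;> rcases l with _ | _ | l <;>
    simp [pair, root, dEntry, sgn, hi] at h ⊢ <;> split_ifs <;> omega

theorem refl_refl (k : ℕ) (x : ℕ → ℤ) : refl k (refl k x) = x := by
  funext i
  have h := pair_refl k k x
  rw [pair_root_self] at h
  simp only [refl] at h ⊢
  rw [h]; ring

theorem refl_eq_self (k : ℕ) (x : ℕ → ℤ) (h : pair k x = 0) : refl k x = x := by
  funext i; simp [refl, h]

theorem dEntry_cases (a b : ℕ) (h : a ≠ b) : dEntry a b = 3 ∨ dEntry a b = 2 := by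
  unfold dEntry; rw [if_neg h]; split_ifs <;> simp

theorem pair_root_of_two {k l : ℕ} (h : dEntry (k + 1) (l + 1) = 2) :
    pair l (root k) = 0 ∧ pair k (root l) = 0 := by
  have hkl : k ≠ l := by rintro rfl; simp [dEntry] at h
  rw [pair_root k l hkl, pair_root l k hkl.symm, dEntry_symm (l + 1), h]; simp

theorem pair_root_of_three {k l : ℕ} (h : dEntry (k + 1) (l + 1) = 3) :
    pair l (root k) = -1 ∧ pair k (root l) = -1 := by
  have hkl : k ≠ l := by rintro rfl; simp [dEntry] at h
  rw [pair_root k l hkl, pair_root l k hkl.symm, dEntry_symm (l + 1), h]; simp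

theorem refl_comm_s5 {k l : ℕ} (h : dEntry (k + 1) (l + 1) = 2) (x : ℕ → ℤ) :
    refl k (refl l x) = refl l (refl k x) := by
  obtain ⟨h1, h2⟩ := pair_root_of_two h
  funext i
  change refl l x i - pair k (refl l x) * root k i = refl k x i - pair l (refl k x) * root l i
  rw [pair_refl, pair_refl, h1, h2]
  simp only [refl]; ring

theorem refl_braid_s5 {k l : ℕ} (h : dEntry (k + 1) (l + 1) = 3) (x : ℕ → ℤ) :
    refl k (refl l (refl k x)) = refl l (refl k (refl l x)) := by
  obtain ⟨h1, h2⟩ := pair_root_of_three h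
  funext i
  change refl k x i - pair l (refl k x) * root l i - pair k (refl l (refl k x)) * root k i =
    refl l x i - pair k (refl l x) * root k i - pair l (refl k (refl l x)) * root l i
  simp only [pair_refl, h1, h2, pair_root_self]
  simp only [refl]; ring

/-- A reflection acts as a swap of two adjacent coordinates, or, for `k = 1`, as a swap followed by
negating both. -/
theorem refl_apply (k : ℕ) (x : ℕ → ℤ) (i : ℕ) :
    refl k x i = if i = hi k then -sgn k * x (hi k - 1)
      else if i = hi k - 1 then -sgn k * x (hi k) else x i := by
  have hne : hi k ≠ hi k - 1 := by unfold hi; omega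
  have hs : sgn k * sgn k = 1 := by unfold sgn; split_ifs <;> rfl
  simp only [refl, pair, root]
  by_cases h1 : i = hi k
  · subst h1; simp only [if_true, if_neg hne]; ring
  · by_cases h2 : i = hi k - 1
    · subst h2; simp only [if_true, if_neg h1]; linear_combination (-(x (hi k - 1))) * hs
    · simp only [if_neg h1, if_neg h2]; ring

/-! ### The group action -/

/-- The reflection `refl k` as an element of the monoid of self-maps under composition. -/
def reflEnd (k : ℕ) : Function.End (ℕ → ℤ) := refl k

theorem isLiftable_refl (m : ℕ) :
    (dMatrix m).IsLiftable (fun k : Fin (m + 1) => reflEnd k) := by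
  intro k l
  have hM : (dMatrix m).M k l = dEntry (k.val + 1) (l.val + 1) := rfl
  rw [hM]
  by_cases hkl : k = l
  · subst hkl
    have : dEntry (k.val + 1) (k.val + 1) = 1 := by simp [dEntry]
    rw [this, pow_one]
    funext x
    exact refl_refl _ x
  · have hne : k.val + 1 ≠ l.val + 1 := fun h => hkl (Fin.ext (by omega))
    rcases dEntry_cases _ _ hne with h | h
    · rw [h]
      funext x
      change refl k (refl l (refl k (refl l (refl k (refl l x))))) = x
      rw [refl_braid_s5 h, refl_refl, refl_refl, refl_refl]
    · rw [h]
      funext x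
      change refl k (refl l (refl k (refl l x))) = x
      rw [refl_comm_s5 h, refl_refl, refl_refl]

/-- The left action of the Coxeter group on vectors by simple reflections. -/
def action (m : ℕ) : DGroup m →* Function.End (ℕ → ℤ) := (dcs m).lift ⟨_, isLiftable_refl m⟩

/-- The image of the all-plus vector under the right action of `v`. -/
def orbit (m : ℕ) (v : DGroup m) : ℕ → ℤ := action m v⁻¹ (fun _ => 1)

theorem action_simple (m : ℕ) (k : Fin (m + 1)) (x : ℕ → ℤ) :
    action m ((dcs m).simple k) x = refl k x := by
  rw [action, CoxeterSystem.lift_apply_simple]; rfl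

theorem orbit_one (m : ℕ) : orbit m 1 = fun _ => 1 := by
  rw [orbit, inv_one, map_one]; rfl

theorem orbit_mul_simple (m : ℕ) (v : DGroup m) (k : Fin (m + 1)) :
    orbit m (v * (dcs m).simple k) = refl k (orbit m v) := by
  rw [orbit, mul_inv_rev, CoxeterSystem.inv_simple, map_mul]
  exact action_simple m k _

theorem pair_plus (k : ℕ) (h : k ≠ 1) : pair k (fun _ => 1) = 0 := by
  simp [pair, sgn, h]

theorem toIdx_val {m k : ℕ} (h : k ≤ m + 1) : (toIdx m k).val = k - 1 := by
  unfold toIdx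
  exact Nat.mod_eq_of_lt (by omega)

theorem action_WP {m : ℕ} (hm : 3 ≤ m) {h : DGroup m} (hh : h ∈ WP m 2) :
    action m h (fun _ => 1) = fun _ => 1 := by
  have hfix : ∀ g ∈ WP m 2, action m g (fun _ => 1) = fun _ => 1 := by
    intro g hg
    induction hg using Subgroup.closure_induction with
    | mem g hg =>
      obtain ⟨k, hk, rfl⟩ := hg
      rw [action_simple]
      refine refl_eq_self _ _ (pair_plus _ fun h => hk (Fin.ext ?_))
      rw [toIdx_val (by omega), h]
    | one => rw [map_one]; rfl
    | mul a b _ _ ha hb =>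
      rw [map_mul]
      change action m a (action m b _) = _
      rw [hb, ha]
    | inv a _ ha =>
      conv_lhs => rw [← ha]
      change (action m a⁻¹ * action m a) _ = _
      rw [← map_mul, inv_mul_cancel, map_one]; rfl
  exact hfix h hh

theorem orbit_WP_mul {m : ℕ} (hm : 3 ≤ m) {h : DGroup m} (hh : h ∈ WP m 2) (v : DGroup m) :
    orbit m (h * v) = orbit m v := by
  rw [orbit, mul_inv_rev, map_mul]
  change action m v⁻¹ (action m h⁻¹ _) = _
  rw [action_WP hm (inv_mem hh)]; rfl

/-! ### Height and weights -/

/-- The height functional: the inner product with `(0, 1, …, m)`. -/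
def height (m : ℕ) (x : ℕ → ℤ) : ℤ := ∑ i ∈ Finset.range (m + 1), (i : ℤ) * x i

theorem height_refl {m k : ℕ} (hm : 1 ≤ m) (hk : k ≤ m) (x : ℕ → ℤ) :
    height m (refl k x) = height m x - pair k x := by
  have h1 : hi k < m + 1 := by unfold hi; omega
  have h2 : hi k - 1 < m + 1 := by omega
  have h3 : ((hi k : ℕ) : ℤ) + sgn k * ((hi k - 1 : ℕ) : ℤ) = 1 := by
    unfold hi sgn
    split_ifs with h
    · subst h; simp
    · have : 1 ≤ max k 1 := by omega
      push_cast [Nat.cast_sub this]; ring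
  have h4 : height m (root k) = 1 := by
    rw [← h3]
    simp only [height, root, mul_add, Finset.sum_add_distrib]
    simp [Finset.sum_ite_eq', h1, h2, mul_comm]
  have h5 : height m (refl k x) = height m x - pair k x * height m (root k) := by
    simp only [height, refl, Finset.mul_sum, ← Finset.sum_sub_distrib]
    exact Finset.sum_congr rfl fun i _ => by ring
  rw [h5, h4, mul_one]

/-- The weights in the orbit of the all-plus vector: sign vectors with an even number of minus
signs among the first `m + 1` entries, the parity being read off from the coordinate sum modulo
`4`. -/
structure IsWeight (m : ℕ) (x : ℕ → ℤ) : Prop where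
  sign : ∀ i, x i = 1 ∨ x i = -1
  even : (4 : ℤ) ∣ (∑ i ∈ Finset.range (m + 1), x i) - (m + 1)

theorem isWeight_plus (m : ℕ) : IsWeight m (fun _ => 1) :=
  ⟨fun _ => Or.inl rfl, by simp⟩

theorem IsWeight.pair_cases {m : ℕ} {x : ℕ → ℤ} (hx : IsWeight m x) (k : ℕ) :
    pair k x = 0 ∨ pair k x = 2 ∨ pair k x = -2 := by
  have h1 := hx.sign (hi k)
  have h2 := hx.sign (hi k - 1)
  unfold pair sgn
  split_ifs <;> omega

theorem IsWeight.reflect {m : ℕ} {x : ℕ → ℤ} (hx : IsWeight m x) {k : ℕ} (hm : 1 ≤ m)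
    (hk : k ≤ m) : IsWeight m (refl k x) := by
  constructor
  · intro i
    rw [refl_apply]
    have h1 := hx.sign (hi k)
    have h2 := hx.sign (hi k - 1)
    have h3 := hx.sign i
    unfold sgn
    split_ifs <;> omega
  · have h1 : hi k < m + 1 := by unfold hi; omega
    have h2 : hi k - 1 < m + 1 := by omega
    have h4 : ∑ i ∈ Finset.range (m + 1), root k i = 1 + sgn k := by
      simp only [root, Finset.sum_add_distrib, ← Finset.mul_sum]
      simp only [Finset.sum_ite_eq', Finset.mem_range, h1, h2, if_true, mul_one]
    have h5 : ∑ i ∈ Finset.range (m + 1), refl k x i =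
        (∑ i ∈ Finset.range (m + 1), x i) - pair k x * (1 + sgn k) := by
      simp only [refl, Finset.sum_sub_distrib, ← Finset.mul_sum, h4]
    rw [h5]
    have h6 := hx.even
    have h7 := hx.pair_cases k
    unfold sgn
    split_ifs
    · rcases h7 with h7 | h7 | h7 <;> rw [h7] <;> omega
    · simpa using h6

theorem isWeight_orbit {m : ℕ} (hm : 1 ≤ m) (v : DGroup m) : IsWeight m (orbit m v) := by
  induction v using (dcs m).simple_induction_right with
  | one => rw [orbit_one]; exact isWeight_plus m
  | mul_simple_right v k ih => rw [orbit_mul_simple]; exact ih.reflect hm (by omega)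

theorem two_mul_sum_range (m : ℕ) : 2 * height m (fun _ => 1) = m * (m + 1) := by
  unfold height
  induction m with
  | zero => simp
  | succ n ih => rw [Finset.sum_range_succ, mul_add, ih]; push_cast; ring

theorem abs_height {m : ℕ} {x : ℕ → ℤ} (hx : IsWeight m x) :
    height m x ≤ height m (fun _ => 1) ∧ -height m (fun _ => 1) ≤ height m x := by
  unfold height
  rw [← Finset.sum_neg_distrib]
  constructor <;> refine Finset.sum_le_sum fun i _ => ?_ <;>
    rcases hx.sign i with h | h <;> simp only [h] <;> omega

/-- Half the drop in height from the all-plus vector to `x`. For a weight the drop is even and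
nonnegative, and this is the number of height-raising reflections leading back up. -/
def depth (m : ℕ) (x : ℕ → ℤ) : ℕ := ((height m (fun _ => 1) - height m x) / 2).toNat

theorem two_mul_depth {m : ℕ} {x : ℕ → ℤ} (hx : IsWeight m x) :
    2 * (depth m x : ℤ) = height m (fun _ => 1) - height m x := by
  have hd : (2 : ℤ) ∣ height m (fun _ => 1) - height m x := by
    unfold height
    rw [← Finset.sum_sub_distrib]
    refine Finset.dvd_sum fun i _ => ?_
    rcases hx.sign i with h | h <;> simp only [h] <;> omega
  have := (abs_height hx).1
  unfold depth
  omega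

theorem depth_refl {m k : ℕ} {x : ℕ → ℤ} (hm : 1 ≤ m) (hk : k ≤ m) (hx : IsWeight m x)
    (h : pair k x = -2) : depth m x = depth m (refl k x) + 1 := by
  have h1 := two_mul_depth hx
  have h2 := two_mul_depth (hx.reflect hm hk)
  have h3 := height_refl hm hk x
  omega

/-- A weight admitting no height-raising reflection agrees with the all-plus vector on the first
`m + 1` entries, hence is moved by `s_2`. The parity condition excludes `x 0 = -1`. -/
theorem pair_one_of_no_descent {m : ℕ} (hm : 1 ≤ m) {x : ℕ → ℤ} (hx : IsWeight m x)
    (h : ∀ k ≤ m, pair k x ≠ -2) : pair 1 x = 2 := by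
  have h1 : x 1 = 1 := by
    have a := h 0 (by omega)
    have b := h 1 hm
    have c := hx.sign 0
    have d := hx.sign 1
    simp [pair, hi, sgn] at a b
    omega
  have hk : ∀ k, k + 1 ≤ m → x (k + 1) = 1 := by
    intro k
    induction k with
    | zero => intro _; exact h1
    | succ k ih =>
      intro hk
      have a := h (k + 2) hk
      have b := hx.sign (k + 2)
      have c := ih (by omega)
      rw [show k + 1 + 1 = k + 2 by rfl]
      simp [pair, hi, sgn] at a
      omega
  have hs := hx.even
  rw [Finset.sum_range_succ', Finset.sum_congr rfl fun i hi => hk i (by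
    have := Finset.mem_range.1 hi; omega)] at hs
  have h0 := hx.sign 0
  simp only [Finset.sum_const, Finset.card_range, nsmul_eq_mul, mul_one] at hs
  simp only [pair, hi, sgn]
  simp only [max_self, if_true, Nat.sub_self]
  omega

/-! ### Lower bound -/

theorem orbit_wordProd (m : ℕ) (L : List (Fin (m + 1))) :
    orbit m ((dcs m).wordProd L) = L.foldl (fun x (k : Fin (m + 1)) => refl k x) (fun _ => 1) := by
  induction L using List.reverseRecOn with
  | nil => rw [CoxeterSystem.wordProd_nil, orbit_one]; rfl
  | append_singleton L k ih =>
    rw [CoxeterSystem.wordProd_append, CoxeterSystem.wordProd_singleton, orbit_mul_simple, ih,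
      List.foldl_append]
    rfl

theorem height_orbit_ge {m : ℕ} (hm : 1 ≤ m) (v : DGroup m) :
    height m (fun _ => 1) ≤ height m (orbit m v) + 2 * ((dcs m).length v : ℤ) := by
  obtain ⟨L, hL, rfl⟩ := (dcs m).exists_isReduced v
  rw [hL.eq]
  clear hL
  induction L using List.reverseRecOn with
  | nil => rw [CoxeterSystem.wordProd_nil, orbit_one]; simp
  | append_singleton L k ih =>
    have h := (isWeight_orbit hm ((dcs m).wordProd L)).pair_cases k
    rw [CoxeterSystem.wordProd_append, CoxeterSystem.wordProd_singleton, orbit_mul_simple,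
      height_refl hm (by omega), List.length_append]
    push_cast [List.length_singleton]
    omega

/-! ### The orbit of the word for `w²` -/

/-- The right action of a word in the 0-based indices `k - 1` of its 1-based letters `k`. -/
def run (L : List ℕ) (x : ℕ → ℤ) : ℕ → ℤ := L.foldl (fun x k => refl (k - 1) x) x

theorem run_append (L L' : List ℕ) (x : ℕ → ℤ) : run (L ++ L') x = run L' (run L x) :=
  List.foldl_append

theorem orbit_wp (m : ℕ) (L : List ℕ) (hL : ∀ k ∈ L, k ≤ m + 1) :
    orbit m (wp m L) = run L (fun _ => 1) := by
  rw [wp, orbit_wordProd, List.foldl_map, run]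
  refine List.foldl_ext _ _ _ fun x k hk => ?_
  rw [toIdx_val (hL k hk)]

/-- The sign vector with minus signs at the positions satisfying `P`. -/
def signs (P : ℕ → Bool) (i : ℕ) : ℤ := if P i then -1 else 1

theorem run_asc (n : ℕ) :
    run (asc 2 (n + 2)) (fun _ => 1) = signs (fun i => i = 0 ∨ i = n + 1) := by
  induction n with
  | zero =>
    funext i
    simp only [asc, run, signs]
    simp [refl_apply, hi, sgn]
    split_ifs <;> omega
  | succ n ih =>
    have : asc 2 (n + 1 + 2) = asc 2 (n + 2) ++ [n + 3] := by
      simp only [asc, show n + 1 + 2 + 1 - 2 = (n + 2 + 1 - 2) + 1 by omega, List.range_succ,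
        List.map_append, List.map_singleton]
      congr 2; omega
    rw [this, run_append, ih]
    funext i
    change refl (n + 2) _ i = _
    simp [refl_apply, hi, sgn, signs]
    split_ifs <;> omega

/-- While the descending part of the block `s_{j+2} ⋯ s_3 c` acts, a plus sign travels from
position `j + 1` down to position `1`. -/
theorem run_desc (m j t : ℕ) (hj : j + 1 < m) (ht : t ≤ j) :
    run ((List.range t).map (fun t => j + 2 - t))
      (signs (fun i => (1 ≤ i ∧ i ≤ j) ∨ i = m ∨ (i = 0 ∧ j % 2 = 0))) =
      signs (fun i => (1 ≤ i ∧ i ≤ j + 1 ∧ i ≠ j + 1 - t) ∨ i = m ∨ (i = 0 ∧ j % 2 = 0)) := by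
  induction t with
  | zero =>
    funext i
    simp only [run, List.range_zero, List.map_nil, List.foldl_nil, signs]
    simp
    split_ifs <;> omega
  | succ t ih =>
    rw [List.range_succ, List.map_append, run_append, ih (by omega)]
    funext i
    change refl (j + 2 - t - 1) _ i = _
    obtain ⟨s, rfl⟩ : ∃ s, j = t + s + 1 := ⟨j - t - 1, by omega⟩
    have h1 : t + s + 1 + 2 - t - 1 = s + 2 := by omega
    have h2 : t + s + 1 + 1 - t = s + 2 := by omega
    have h3 : t + s + 1 + 1 - (t + 1) = s + 1 := by omega
    rw [h1, h2, h3]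
    simp [refl_apply, hi, sgn, signs]
    split_ifs <;> omega

/-- One block of `w̃_{m+1}` extends the run of minus signs starting at position `1` by one; the sign
at position `0` alternates, as parity demands. -/
theorem run_block (m j : ℕ) (hj : j + 1 < m) :
    run (desc (j + 2) 3 ++ [if (j + 1) % 2 = 1 then 1 else 2])
      (signs (fun i => (1 ≤ i ∧ i ≤ j) ∨ i = m ∨ (i = 0 ∧ j % 2 = 0))) =
      signs (fun i => (1 ≤ i ∧ i ≤ j + 1) ∨ i = m ∨ (i = 0 ∧ (j + 1) % 2 = 0)) := by
  rw [run_append, desc, show j + 2 + 1 - 3 = j by omega, run_desc m j j hj le_rfl]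
  funext i
  by_cases h : (j + 1) % 2 = 1
  · rw [if_pos h]
    change refl 0 _ i = _
    simp [refl_apply, hi, sgn, signs]
    split_ifs <;> omega
  · rw [if_neg h]
    change refl 1 _ i = _
    simp [refl_apply, hi, sgn, signs]
    split_ifs <;> omega

theorem run_blocks (m n : ℕ) (hn : n < m) :
    run ((List.range n).flatMap
      (fun j => desc (j + 2) 3 ++ [if (j + 1) % 2 = 1 then 1 else 2]))
      (signs (fun i => i = 0 ∨ i = m)) =
      signs (fun i => (1 ≤ i ∧ i ≤ n) ∨ i = m ∨ (i = 0 ∧ n % 2 = 0)) := by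
  induction n with
  | zero =>
    funext i
    simp only [run, List.range_zero, List.flatMap_nil, List.foldl_nil, signs]
    simp
    split_ifs <;> omega
  | succ n ih =>
    rw [List.range_succ, List.flatMap_append, run_append, ih (by omega), List.flatMap_singleton,
      run_block m n (by omega)]

theorem w2_letters {m : ℕ} (hm : 3 ≤ m) :
    ∀ k ∈ asc 2 (m + 1) ++ wTildeWord m, k ≤ m + 1 := by
  intro k hk
  simp only [asc, wTildeWord, desc, List.mem_append, List.mem_map, List.mem_range,
    List.mem_flatMap, List.mem_singleton] at hk
  rcases hk with ⟨t, h1, h2⟩ | ⟨j, h1, ⟨t, h2, h3⟩ | h2⟩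
  · omega
  · omega
  · split_ifs at h2 <;> omega

theorem height_orbit_w2 {m : ℕ} (hm : 3 ≤ m) :
    height m (orbit m (wp m (asc 2 (m + 1) ++ wTildeWord m))) = -height m (fun _ => 1) := by
  obtain ⟨n, rfl⟩ : ∃ n, m = n + 1 := ⟨m - 1, by omega⟩
  rw [orbit_wp _ _ (w2_letters hm), run_append, run_asc, wTildeWord,
    run_blocks (n + 1) _ (by omega)]
  unfold height
  rw [← Finset.sum_neg_distrib]
  refine Finset.sum_congr rfl fun i hi => ?_
  have := Finset.mem_range.1 hi
  rcases Nat.eq_zero_or_pos i with h | h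
  · subst h; simp
  · simp [signs]
    omega

theorem two_mul_length_w2 {m : ℕ} (hm : 1 ≤ m) :
    2 * (asc 2 (m + 1) ++ wTildeWord m).length = m * (m + 1) := by
  have h : ∀ n, 2 * ((List.range n).flatMap
      (fun j => desc (j + 2) 3 ++ [if (j + 1) % 2 = 1 then 1 else 2])).length = n * (n + 1) := by
    intro n
    induction n with
    | zero => simp
    | succ n ih =>
      rw [List.range_succ, List.flatMap_append, List.length_append, mul_add, ih]
      simp [desc]
      ring
  obtain ⟨n, rfl⟩ : ∃ n, m = n + 1 := ⟨m - 1, by omega⟩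
  rw [List.length_append, mul_add, wTildeWord, h]
  simp [asc]
  ring

/-! ### Short coset representatives -/

/-- Two elements lie in the same right coset of `W_{P_2}`. -/
def SameCoset (m : ℕ) (v w : DGroup m) : Prop := ∃ h ∈ WP m 2, w = h * v

theorem SameCoset.rfl {m : ℕ} {v : DGroup m} : SameCoset m v v := ⟨1, one_mem _, (one_mul v).symm⟩

theorem SameCoset.symm {m : ℕ} {v w : DGroup m} (h : SameCoset m v w) : SameCoset m w v := by
  obtain ⟨g, hg, rfl⟩ := h
  exact ⟨g⁻¹, inv_mem hg, by group⟩

theorem SameCoset.trans {m : ℕ} {u v w : DGroup m} (h : SameCoset m u v) (h' : SameCoset m v w) :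
    SameCoset m u w := by
  obtain ⟨g, hg, rfl⟩ := h
  obtain ⟨g', hg', rfl⟩ := h'
  exact ⟨g' * g, mul_mem hg' hg, by group⟩

theorem SameCoset.mul {m : ℕ} {v w : DGroup m} (h : SameCoset m v w) (u : DGroup m) :
    SameCoset m (v * u) (w * u) := by
  obtain ⟨g, hg, rfl⟩ := h
  exact ⟨g, hg, by group⟩

open Classical in
/-- The representative found by climbing `n` steps from the weight `x`, each by an arbitrary
height-raising reflection. -/
noncomputable def climb (m : ℕ) : ℕ → (ℕ → ℤ) → DGroup m
  | 0, _ => 1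
  | n + 1, x => if h : ∃ k : Fin (m + 1), pair k x = -2 then
      climb m n (refl h.choose x) * (dcs m).simple h.choose else 1

/-- The representative of the coset attached to the weight `x`. -/
noncomputable def rep (m : ℕ) (x : ℕ → ℤ) : DGroup m := climb m (depth m x) x

theorem length_climb (m n : ℕ) (x : ℕ → ℤ) : (dcs m).length (climb m n x) ≤ n := by
  induction n generalizing x with
  | zero => simp [climb]
  | succ n ih =>
    unfold climb
    split_ifs with h
    · refine ((dcs m).length_mul_le _ _).trans ?_
      rw [CoxeterSystem.length_simple]
      exact Nat.add_le_add_right (ih _) 1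
    · simp

theorem rep_eq {m : ℕ} (hm : 1 ≤ m) {x : ℕ → ℤ} (hx : IsWeight m x)
    (h : ∃ k : Fin (m + 1), pair k x = -2) :
    ∃ k : Fin (m + 1), pair k x = -2 ∧ rep m x = rep m (refl k x) * (dcs m).simple k := by
  refine ⟨h.choose, h.choose_spec, ?_⟩
  rw [rep, depth_refl hm (Nat.le_of_lt_succ h.choose.isLt) hx h.choose_spec, climb, dif_pos h]
  rfl

theorem simple_comm {m : ℕ} {k l : Fin (m + 1)} (h : dEntry (k.val + 1) (l.val + 1) = 2) :
    (dcs m).simple k * (dcs m).simple l = (dcs m).simple l * (dcs m).simple k := by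
  have h1 := (dcs m).simple_mul_simple_pow k l
  rw [show (dMatrix m).M k l = 2 from h, pow_two] at h1
  have := eq_inv_of_mul_eq_one_left h1
  rwa [mul_inv_rev, CoxeterSystem.inv_simple, CoxeterSystem.inv_simple] at this

theorem simple_braid {m : ℕ} {k l : Fin (m + 1)} (h : dEntry (k.val + 1) (l.val + 1) = 3) :
    (dcs m).simple k * (dcs m).simple l * (dcs m).simple k =
      (dcs m).simple l * (dcs m).simple k * (dcs m).simple l := by
  have h1 := (dcs m).simple_mul_simple_pow k l
  rw [show (dMatrix m).M k l = 3 from h] at h1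
  have h2 : ((dcs m).simple k * (dcs m).simple l * (dcs m).simple k) *
      ((dcs m).simple l * (dcs m).simple k * (dcs m).simple l) = 1 := by
    rw [← h1]; simp only [pow_succ, pow_zero, one_mul, mul_assoc]
  have := eq_inv_of_mul_eq_one_left h2
  simpa only [mul_inv_rev, CoxeterSystem.inv_simple, mul_assoc] using this

/-- Modulo `W_{P_2}`, the representative of `x` may be computed by climbing along any
height-raising reflection, and it absorbs every simple reflection fixing `x`. They are proved
together because the second fact uses the first at smaller depth. -/
theorem rep_descent {m : ℕ} (hm : 1 ≤ m) (n : ℕ) : ∀ x : ℕ → ℤ, IsWeight m x → depth m x = n →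
    (∀ t : Fin (m + 1), pair t x = -2 →
      SameCoset m (rep m x) (rep m (refl t x) * (dcs m).simple t)) ∧
    (∀ s : Fin (m + 1), pair s x = 0 → SameCoset m (rep m x) (rep m x * (dcs m).simple s)) := by
  induction n using Nat.strong_induction_on with
  | _ n ih =>
  intro x hx hn
  have le (k : Fin (m + 1)) : k.val ≤ m := Nat.le_of_lt_succ k.isLt
  by_cases hd : ∃ k : Fin (m + 1), pair k x = -2
  · obtain ⟨k, hk, hrep⟩ := rep_eq hm hx hd
    have hy := hx.reflect hm (le k)
    have hdk := depth_refl hm (le k) hx hk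
    obtain ⟨ihD, ihS⟩ := ih _ (by omega) (refl k x) hy rfl
    constructor
    · intro t ht
      by_cases hkt : k = t
      · subst hkt; rw [hrep]; exact SameCoset.rfl
      have hne : k.val + 1 ≠ t.val + 1 := fun h => hkt (Fin.ext (by omega))
      rcases dEntry_cases _ _ hne with hM | hM
      · -- adjacent nodes would give a weight pairing to `-4` with a root
        exfalso
        have h1 := pair_refl k t x
        rw [(pair_root_of_three hM).1, hk, ht] at h1
        have h2 := hy.pair_cases t
        omega
      · have h1 := pair_refl k t x
        rw [(pair_root_of_two hM).1, ht] at h1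
        have h2 := pair_refl t k x
        rw [(pair_root_of_two hM).2, hk] at h2
        have hdt := depth_refl hm (le t) hx ht
        obtain ⟨ihD', -⟩ := ih _ (by omega) (refl t x) (hx.reflect hm (le t)) rfl
        have a := (ihD t (by omega)).mul ((dcs m).simple k)
        have b := (ihD' k (by omega)).mul ((dcs m).simple t)
        rw [mul_assoc, ← simple_comm hM, ← refl_comm_s5 hM, ← mul_assoc] at a
        rw [hrep]
        exact a.trans b.symm
    · intro s hs
      have hks : k ≠ s := by rintro rfl; omega
      have hne : k.val + 1 ≠ s.val + 1 := fun h => hks (Fin.ext (by omega))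
      have h1 := pair_refl k s x
      rcases dEntry_cases _ _ hne with hM | hM
      · -- the braid relation carries the absorption of `k` at `z` to that of `s` at `x`
        rw [(pair_root_of_three hM).1, hk, hs] at h1
        have a := ihD s (by omega)
        have hdz := depth_refl hm (le s) hy (by omega)
        have h2 := pair_refl s k (refl k x)
        rw [(pair_root_of_three hM).2, pair_refl k k x, pair_root_self, h1, hk] at h2
        obtain ⟨-, ihS'⟩ := ih _ (by omega) (refl s (refl k x)) (hy.reflect hm (le s)) rfl
        have b := ihS' k (by omega)
        have a1 := a.mul ((dcs m).simple k)
        have a2 := a1.mul ((dcs m).simple s)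
        have b1 := (b.mul ((dcs m).simple s)).mul ((dcs m).simple k)
        rw [hrep]
        refine (a1.trans b1).trans ?_
        have e : rep m (refl s (refl k x)) * (dcs m).simple k * (dcs m).simple s *
            (dcs m).simple k = rep m (refl s (refl k x)) * (dcs m).simple s * (dcs m).simple k *
            (dcs m).simple s := by
          have := simple_braid hM
          simp only [mul_assoc] at this ⊢
          rw [this]
        rw [e]
        exact a2.symm
      · rw [(pair_root_of_two hM).1, hs] at h1
        have a := (ihS s (by omega)).mul ((dcs m).simple k)
        rw [hrep, mul_assoc _ ((dcs m).simple k), simple_comm hM, ← mul_assoc]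
        exact a
  · have h1 := pair_one_of_no_descent hm hx fun k hk h => hd ⟨⟨k, by omega⟩, h⟩
    refine ⟨fun t ht => absurd ⟨t, ht⟩ hd, fun s hs => ?_⟩
    have hrep : rep m x = 1 := by
      rw [rep]
      cases depth m x with
      | zero => rfl
      | succ n => rw [climb, dif_neg hd]
    rw [hrep, one_mul]
    refine ⟨_, Subgroup.subset_closure ⟨s, ?_, rfl⟩, (mul_one _).symm⟩
    rintro rfl
    rw [toIdx_val (by omega), h1] at hs
    omega

theorem orbit_rep {m : ℕ} (hm : 1 ≤ m) (v : DGroup m) : SameCoset m v (rep m (orbit m v)) := by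
  induction v using (dcs m).simple_induction_right with
  | one =>
    have : depth m (fun _ => 1) = 0 := by simp [depth]
    rw [orbit_one, rep, this]
    exact SameCoset.rfl
  | mul_simple_right v k ih =>
    rw [orbit_mul_simple]
    have hk : k.val ≤ m := Nat.le_of_lt_succ k.isLt
    have hx := isWeight_orbit hm v
    refine (ih.mul _).trans ?_
    rcases hx.pair_cases k with h | h | h
    · rw [refl_eq_self _ _ h]
      exact ((rep_descent hm _ _ hx rfl).2 k h).symm
    · have h1 := pair_refl k k (orbit m v)
      rw [pair_root_self] at h1
      have a := (rep_descent hm _ _ (hx.reflect hm hk) rfl).1 k (by omega)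
      rw [refl_refl] at a
      exact a.symm
    · have a := ((rep_descent hm _ _ hx rfl).1 k h).mul ((dcs m).simple k)
      rwa [CoxeterSystem.simple_mul_simple_cancel_right] at a

/-- Set `w² := (s_2 s_3 ⋯ s_{m+1}) · w̃_{m+1}`. Then `ℓ(w²) = m(m+1)/2`, `w²` is the
minimal-length element of its right coset `W_{P_2} · w²`, and every right coset
`W_{P_2} · v` contains an element of length at most `m(m+1)/2`; i.e. `w²` is the longest
element of the set `W^{P_2}` of minimal-length representatives of the right cosets. -/
theorem statement5 (m : ℕ) (hm : 3 ≤ m) :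
    (dcs m).length (wp m (asc 2 (m + 1) ++ wTildeWord m)) = m * (m + 1) / 2 ∧
    (∀ u : DGroup m, (∃ h ∈ WP m 2, u = h * wp m (asc 2 (m + 1) ++ wTildeWord m)) →
      (dcs m).length (wp m (asc 2 (m + 1) ++ wTildeWord m)) ≤ (dcs m).length u) ∧
    ∀ v : DGroup m, ∃ u : DGroup m,
      (∃ h ∈ WP m 2, u = h * v) ∧ (dcs m).length u ≤ m * (m + 1) / 2 := by
  have hm1 : 1 ≤ m := by omega
  have hhalf : m * (m + 1) / 2 * 2 = m * (m + 1) :=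
    Nat.div_mul_cancel (Nat.even_mul_succ_self m).two_dvd
  have htop := two_mul_sum_range m
  have hlen := two_mul_length_w2 hm1
  have hupper : (dcs m).length (wp m (asc 2 (m + 1) ++ wTildeWord m)) ≤ m * (m + 1) / 2 := by
    refine ((dcs m).length_wordProd_le _).trans ?_
    rw [List.length_map]
    omega
  have hlower : ∀ u : DGroup m, (∃ h ∈ WP m 2, u = h * wp m (asc 2 (m + 1) ++ wTildeWord m)) →
      m * (m + 1) / 2 ≤ (dcs m).length u := by
    rintro u ⟨h, hh, rfl⟩
    have h1 := height_orbit_ge hm1 (h * wp m (asc 2 (m + 1) ++ wTildeWord m))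
    rw [orbit_WP_mul hm hh, height_orbit_w2 hm] at h1
    zify at hhalf ⊢
    linarith
  refine ⟨le_antisymm hupper (hlower _ ⟨1, one_mem _, (one_mul _).symm⟩),
    fun u hu => hupper.trans (hlower u hu), fun v => ?_⟩
  refine ⟨rep m (orbit m v), orbit_rep hm1 v, (length_climb m _ _).trans ?_⟩
  have hx := isWeight_orbit hm1 v
  have h1 := two_mul_depth hx
  have h2 := (abs_height hx).2
  zify at hhalf ⊢
  linarith

end FMK3
end

section
/- One has ω_2 · w_1 = ω_2 · (s_2 s_3 ⋯ s_{m+1}); that is, applying successively (left to right) the reflections of the defining word of w_1 to the fundamental weight ω_2 yields the same vector as applying successively the reflections r_2, r_3, …, r_{m+1}, namely the vector (−e_1 + e_2 + ⋯ + e_m + e_{m+1})/2. Consequently the right actions on ω_2 of w_1 · w̃_{m+1} and of (s_2 s_3 ⋯ s_{m+1}) · w̃_{m+1} agree, for any word w̃_{m+1}. (This is the key computation in the proof of Lemma 3.3.) -/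
/-!
The orbit of `ω_2` needed here consists of the vectors `vec m k`, `0 ≤ k ≤ m`, all of whose
coordinates are `1/2` except for a `-1/2` in the (1-based) position `m + 1 - k`.
For `2 ≤ k ≤ m + 1` the reflection `r_k` exchanges two adjacent coordinates, so it sends
`vec m (k - 2)` to `vec m (k - 1)` (`reflect_vec_step`) and fixes `vec m j` for `j ≥ k`
(`reflect_vec_fix`).

Since `ω_2 = vec m 0`, the word `s_2 s_3 ⋯ s_{m+1}` moves it step by step to `vec m m`. In `w_1`, the
block `s_{j+2} s_{j+1} ⋯ s_2` meets the vector `vec m j`: its first letter sends it to `vec m (j + 1)`,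
and all the remaining letters fix this vector. So the `m` blocks also lead from `vec m 0` to
`vec m m`.
-/

namespace FMK3

/-- The standard basis vector `e_k` (1-based index `k`) of `ℝ^{m+1}`. -/
noncomputable def eVec (m k : ℕ) : Fin (m + 1) → ℝ := Pi.single (toIdx m k) 1

/-- The simple roots of the root system of type `D_{m+1}`: `α_1 = e_m + e_{m+1}`,
`α_2 = e_m − e_{m+1}`, and `α_j = e_{m+2−j} − e_{m+3−j}` for `3 ≤ j ≤ m+1`. -/
noncomputable def alphaVec (m k : ℕ) : Fin (m + 1) → ℝ :=
  if k = 1 then eVec m m + eVec m (m + 1)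
  else if k = 2 then eVec m m - eVec m (m + 1)
  else eVec m (m + 2 - k) - eVec m (m + 3 - k)

/-- The standard inner product on `ℝ^{m+1}`. -/
def ip (m : ℕ) (u v : Fin (m + 1) → ℝ) : ℝ := ∑ i, u i * v i

/-- The orthogonal reflection `r_k(v) = v − ⟨v, α_k⟩ α_k` in the hyperplane orthogonal
to the simple root `α_k`. -/
noncomputable def reflect (m k : ℕ) (v : Fin (m + 1) → ℝ) : Fin (m + 1) → ℝ :=
  v - ip m v (alphaVec m k) • alphaVec m k

/-- The right action of a word `s_{i_1} s_{i_2} ⋯ s_{i_k}` on a vector: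
`v · (s_{i_1} ⋯ s_{i_k}) = r_{i_k}(⋯ r_{i_2}(r_{i_1}(v)) ⋯)`. -/
noncomputable def actWord (m : ℕ) (v : Fin (m + 1) → ℝ) (w : List ℕ) : Fin (m + 1) → ℝ :=
  w.foldl (fun u k => reflect m k u) v

/-- The fundamental weight `ω_1 = (e_1 + ⋯ + e_m + e_{m+1})/2` at node `1`. -/
noncomputable def omega1 (m : ℕ) : Fin (m + 1) → ℝ := fun _ => 1 / 2

/-- The fundamental weight `ω_2 = (e_1 + ⋯ + e_m − e_{m+1})/2` at node `2`. -/
noncomputable def omega2 (m : ℕ) : Fin (m + 1) → ℝ :=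
  fun i => if i.val = m then -(1 / 2) else 1 / 2

/-- The vector `(e_1 + ⋯ + e_{m+1})/2 - e_{m+1-k}` (1-based indices), for `k ≤ m`: the sign change
is in the coordinate with 0-based index `m - k`. -/
noncomputable def vec (m k : ℕ) : Fin (m + 1) → ℝ :=
  fun i => if i.val + k = m then -(1 / 2) else 1 / 2

theorem omega2_eq_vec (m : ℕ) : omega2 m = vec m 0 := rfl

theorem toIdx_eq (m k : ℕ) (h1 : 1 ≤ k) (hk : k ≤ m + 1) :
    toIdx m k = ⟨k - 1, by omega⟩ :=
  Fin.ext (Nat.mod_eq_of_lt (by omega))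

/-- With 0-based coordinates, `α_{k+2} = e_{m-1-k} - e_{m-k}`; this covers both `α_2` and the
roots `α_j` with `j ≥ 3`. -/
theorem alphaVec_eq (m k : ℕ) (hk : k + 1 ≤ m) :
    alphaVec m (k + 2) =
      Pi.single (⟨m - 1 - k, by omega⟩ : Fin (m + 1)) 1 -
        Pi.single (⟨m - k, by omega⟩ : Fin (m + 1)) 1 := by
  unfold alphaVec eVec
  rw [if_neg (by omega)]
  split_ifs with h
  · obtain rfl : k = 0 := by omega
    rw [toIdx_eq m m (by omega) (by omega), toIdx_eq m (m + 1) (by omega) le_rfl]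
    rfl
  · rw [toIdx_eq m _ (by omega) (by omega), toIdx_eq m _ (by omega) (by omega)]
    congr 3 <;> omega

theorem reflect_apply (m k : ℕ) (hk : k + 1 ≤ m) (u : Fin (m + 1) → ℝ) (i : Fin (m + 1)) :
    reflect m (k + 2) u i =
      u i - (u ⟨m - 1 - k, by omega⟩ - u ⟨m - k, by omega⟩) *
        ((if i.val = m - 1 - k then 1 else 0) - (if i.val = m - k then 1 else 0)) := by
  simp [reflect, ip, alphaVec_eq m k hk, mul_sub, Finset.sum_sub_distrib, Pi.single_apply]
  simp only [Fin.ext_iff]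

/-- `r_{k+2}` moves the sign of `vec m k` one place to the left. -/
theorem reflect_vec_step (m k : ℕ) (hk : k + 1 ≤ m) :
    reflect m (k + 2) (vec m k) = vec m (k + 1) := by
  funext i
  rw [reflect_apply m k hk]
  simp only [vec]
  rw [if_neg (show ¬ m - 1 - k + k = m by omega), if_pos (show m - k + k = m by omega)]
  split_ifs <;> first | omega | norm_num

/-- `r_{k+2}` fixes `vec m j` for `j ≥ k + 2`, both exchanged coordinates being `1/2`. -/
theorem reflect_vec_fix (m k j : ℕ) (hk : k + 1 ≤ m) (hj : k + 2 ≤ j) :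
    reflect m (k + 2) (vec m j) = vec m j := by
  funext i
  rw [reflect_apply m k hk]
  simp only [vec]
  rw [if_neg (show ¬ m - 1 - k + j = m by omega), if_neg (show ¬ m - k + j = m by omega)]
  simp

theorem actWord_append (m : ℕ) (v : Fin (m + 1) → ℝ) (w w' : List ℕ) :
    actWord m v (w ++ w') = actWord m (actWord m v w) w' :=
  List.foldl_append

theorem actWord_eq_self (m : ℕ) (v : Fin (m + 1) → ℝ) (w : List ℕ)
    (h : ∀ k ∈ w, reflect m k v = v) : actWord m v w = v := by
  induction w with
  | nil => rfl
  | cons k w ih =>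
    change actWord m (reflect m k v) w = v
    rw [h k (by simp)]
    exact ih fun l hl => h l (by simp [hl])

theorem actWord_asc (m n : ℕ) (hn : n ≤ m) :
    actWord m (vec m 0) (asc 2 (n + 1)) = vec m n := by
  induction n with
  | zero => rfl
  | succ n ih =>
    have h : asc 2 (n + 1 + 1) = asc 2 (n + 1) ++ [n + 2] := by
      rw [asc, asc, show n + 1 + 1 + 1 - 2 = n + 1 by omega, show n + 1 + 1 - 2 = n by omega]
      simp [List.range_succ, Nat.add_comm]
    rw [h, actWord_append, ih (by omega)]
    exact reflect_vec_step m n hn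

/-- The block `s_{j+2} ⋯ s_2` acts on `vec m j` through its first letter only. -/
theorem actWord_desc (m j : ℕ) (hj : j + 1 ≤ m) :
    actWord m (vec m j) (desc (j + 2) 2) = vec m (j + 1) := by
  have h : desc (j + 2) 2 = (j + 2) :: desc (j + 1) 2 := by
    simp [desc, List.range_succ_eq_map, Function.comp_def]
  rw [h]
  change actWord m (reflect m (j + 2) (vec m j)) _ = _
  rw [reflect_vec_step m j hj]
  refine actWord_eq_self m _ _ fun k hk => ?_
  simp only [desc, List.mem_map, List.mem_range] at hk
  obtain ⟨t, ht, rfl⟩ := hk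
  obtain ⟨l, hl⟩ : ∃ l, j + 1 - t = l + 2 := ⟨j + 1 - t - 2, by omega⟩
  rw [hl]
  exact reflect_vec_fix m l (j + 1) (by omega) (by omega)

/-- The first `n` blocks of `w_1` send `vec m 0` to `vec m n`. -/
theorem actWord_blocks (m n : ℕ) (hn : n ≤ m) :
    actWord m (vec m 0) ((List.range n).flatMap fun j => desc (j + 2) 2) = vec m n := by
  induction n with
  | zero => rfl
  | succ n ih =>
    rw [List.range_succ, List.flatMap_append, actWord_append, ih (by omega)]
    simpa using actWord_desc m n hn

/-- `ω_2 · w_1 = ω_2 · (s_2 s_3 ⋯ s_{m+1})`, and this common vector is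
`(−e_1 + e_2 + ⋯ + e_m + e_{m+1})/2`; consequently the right actions on `ω_2` of
`w_1 · w̃` and of `(s_2 s_3 ⋯ s_{m+1}) · w̃` agree for any word `w̃`. -/
theorem statement6 (m : ℕ) (hm : 3 ≤ m) :
    actWord m (omega2 m) (w1Word m) = actWord m (omega2 m) (asc 2 (m + 1)) ∧
    actWord m (omega2 m) (asc 2 (m + 1)) =
      (fun i : Fin (m + 1) => if i.val = 0 then -(1 / 2) else 1 / 2) ∧
    ∀ w : List ℕ,
      actWord m (omega2 m) (w1Word m ++ w) = actWord m (omega2 m) (asc 2 (m + 1) ++ w) := by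
  have h1 : actWord m (omega2 m) (w1Word m) = vec m m := actWord_blocks m m le_rfl
  have h2 : actWord m (omega2 m) (asc 2 (m + 1)) = vec m m := actWord_asc m m le_rfl
  refine ⟨h1.trans h2.symm, ?_, fun w => ?_⟩
  · rw [h2]
    funext i
    simp [vec]
  · rw [actWord_append, actWord_append, h1, h2]

end FMK3
end
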